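/- Let n, r ≥ 1 and let C = [C_{ij}] ∈ M_{nr} be a positive semidefinite n×n block matrix with blocks C_{ij} ∈ M_r satisfying C_{ii} = I_r for all i. Then there exist a positive integer N, unitary matrices U_1, …, U_n ∈ M_N, and an N×r matrix V with V^*V = I_r, such that C_{ij} = V^* U_i U_j^* V for all 1 ≤ i, j ≤ n. -/

import Mathlib

/-!
A Gram factorization `blockMat C = Bᴴ * B` gives `C i j = a i * (a j)ᴴ`, where `a i` is the `i`-th
block row of `Bᴴ`. The condition `C i i = 1` says that each `a i` is a coisometry, so
`halmos (a i) = [a i, 0; 1 - (a i)ᴴ * a i, (a i)ᴴ]` is unitary. The corner of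
`halmos (a i) * (halmos (a j))ᴴ` is `a i * (a j)ᴴ = C i j`, and `V` is the inclusion of that corner.
The rows of `halmos a` are indexed by `m ⊕ s` and its columns by `s ⊕ m`; both are identified with
`Fin N`, and the column identification does not affect `U i * (U j)ᴴ`.
-/

open ComplexOrder Matrix

/-- The `m × m` block matrix with `r × r` blocks `R i j`, viewed as an element of
`M_{mr}` (indexed by `Fin m × Fin r`). -/
def blockMat {m r : ℕ} (R : Fin m → Fin m → Matrix (Fin r) (Fin r) ℂ) :
    Matrix (Fin m × Fin r) (Fin m × Fin r) ℂ :=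
  Matrix.of fun ik jl => R ik.1 jl.1 ik.2 jl.2

/-- The Halmos dilation of a coisometry `a : ℂ^s → ℂ^m`. The defect operator `(1 - a * aᴴ)^(1/2)`
vanishes and `(1 - aᴴ * a)^(1/2)` is the projection `1 - aᴴ * a`, so no square root is needed. -/
def halmos {m s : Type*} [Fintype m] [DecidableEq s] (a : Matrix m s ℂ) :
    Matrix (m ⊕ s) (s ⊕ m) ℂ :=
  fromBlocks a 0 (1 - aᴴ * a) aᴴ

lemma halmos_mul_conjTranspose {m s : Type*} [Fintype m] [Fintype s] [DecidableEq m]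
    [DecidableEq s] (a : Matrix m s ℂ) (ha : a * aᴴ = 1) : halmos a * (halmos a)ᴴ = 1 := by
  have h₁ : a * (aᴴ * a) = a := by rw [← Matrix.mul_assoc, ha, Matrix.one_mul]
  have h₂ : aᴴ * a * (aᴴ * a) = aᴴ * a := by rw [Matrix.mul_assoc, h₁]
  have h₃ : aᴴ * a * aᴴ = aᴴ := by rw [Matrix.mul_assoc, ha, Matrix.mul_one]
  rw [halmos, fromBlocks_conjTranspose, fromBlocks_multiply, ← fromBlocks_one]
  congr 1 <;> simp [Matrix.mul_sub, Matrix.sub_mul, h₁, h₂, h₃, ha]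

/-- Compressing `halmos a * (halmos b)ᴴ` to the first summand of `m ⊕ s` gives `a * bᴴ`. -/
lemma halmos_corner {m s : Type*} [Fintype m] [Fintype s] [DecidableEq m]
    [DecidableEq s] (a b : Matrix m s ℂ) :
    (fromRows (1 : Matrix m m ℂ) (0 : Matrix s m ℂ))ᴴ * (halmos a * (halmos b)ᴴ) *
      fromRows (1 : Matrix m m ℂ) (0 : Matrix s m ℂ) = a * bᴴ := by
  rw [halmos, halmos, fromBlocks_conjTranspose, fromBlocks_multiply,
    conjTranspose_fromRows_eq_fromCols_conjTranspose, fromCols_mul_fromBlocks,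
    fromCols_mul_fromRows]
  simp

/-- Unitary dilation: a positive semidefinite `n × n` block matrix `C` with blocks in `M_r`
whose diagonal blocks equal `I_r` can be written as `C_{ij} = V^* U_i U_j^* V` for some
unitaries `U_1, …, U_n ∈ M_N` and an isometry `V : ℂ^r → ℂ^N`. -/
theorem unitary_dilation_of_block_psd (n r : ℕ) (hn : 1 ≤ n) (hr : 1 ≤ r)
    (C : Fin n → Fin n → Matrix (Fin r) (Fin r) ℂ)
    (hC : (blockMat C).PosSemidef)
    (hdiag : ∀ i, C i i = 1) :
    ∃ (N : ℕ), 0 < N ∧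
      ∃ (U : Fin n → Matrix (Fin N) (Fin N) ℂ) (V : Matrix (Fin N) (Fin r) ℂ),
        (∀ i, U i ∈ Matrix.unitaryGroup (Fin N) ℂ) ∧
        Vᴴ * V = 1 ∧
        ∀ i j, C i j = Vᴴ * (U i * (U j)ᴴ) * V := by
  obtain ⟨B, hB⟩ : ∃ B : Matrix (Fin n × Fin r) (Fin n × Fin r) ℂ, blockMat C = Bᴴ * B := by
    open scoped MatrixOrder in
    exact CStarAlgebra.nonneg_iff_eq_star_mul_self.mp hC.nonneg
  let a : Fin n → Matrix (Fin r) (Fin n × Fin r) ℂ := fun i => Bᴴ.submatrix (fun k => (i, k)) id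
  have hCa : ∀ i j, C i j = a i * (a j)ᴴ := by
    intro i j
    ext k l
    simpa [blockMat, a, Matrix.mul_apply] using congrFun (congrFun hB (i, k)) (j, l)
  have ha : ∀ i, a i * (a i)ᴴ = 1 := fun i => by rw [← hCa, hdiag]
  let N := r + n * r
  let e : Fin N ≃ Fin r ⊕ (Fin n × Fin r) :=
    (Fintype.equivFinOfCardEq (by simp [N])).symm
  let f : Fin N ≃ (Fin n × Fin r) ⊕ Fin r := e.trans (Equiv.sumComm _ _)
  let V₀ : Matrix (Fin r ⊕ (Fin n × Fin r)) (Fin r) ℂ := fromRows 1 0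
  have hU : ∀ i j, (halmos (a i)).submatrix e f * ((halmos (a j)).submatrix e f)ᴴ =
      (halmos (a i) * (halmos (a j))ᴴ).submatrix e e := fun i j => by
    rw [conjTranspose_submatrix, submatrix_mul_equiv]
  refine ⟨N, by positivity, fun i => (halmos (a i)).submatrix e f, V₀.submatrix e id,
    fun i => ?_, ?_, fun i j => ?_⟩
  · rw [Matrix.mem_unitaryGroup_iff, star_eq_conjTranspose, hU,
      halmos_mul_conjTranspose _ (ha i), submatrix_one_equiv]
  · rw [conjTranspose_submatrix, submatrix_mul_equiv, submatrix_id_id,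
      conjTranspose_fromRows_eq_fromCols_conjTranspose, fromCols_mul_fromRows]
    simp
  · rw [hU, conjTranspose_submatrix, submatrix_mul_equiv, submatrix_mul_equiv, submatrix_id_id,
      halmos_corner, hCa]
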